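/- Every valid layout that contains at least one item V but contains no pointer item is not deserializable. -/

import Mathlib

/-- A layout item: fixed-length field, variable-length field, or pointer `P o s`
with offset `o` and span `s`. -/
inductive Item : Type where
  | F : Item
  | V : Item
  | P : ℕ → ℕ → Item
deriving DecidableEq

/-- A layout is valid if every pointer `P o s` occurring in it satisfies
`o < |ℓ|` and `s ≤ |ℓ| - o`. -/
def ValidLayout (ℓ : List Item) : Prop :=
  ∀ o s : ℕ, Item.P o s ∈ ℓ → o < ℓ.length ∧ s ≤ ℓ.length - o

/-- Facts the parser can know about positions of the layout. -/
inductive ParseFact : Type where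
  | Beg : ℕ → ParseFact
  | Len : ℕ → ParseFact
  | Val : ℕ → ParseFact
deriving DecidableEq

/-- The smallest set of facts closed under the parser's inference rules. -/
inductive Derivable (ℓ : List Item) : ParseFact → Prop where
  | begin : Derivable ℓ (.Beg 0)
  | fieldF (i : ℕ) : ℓ[i]? = some .F → Derivable ℓ (.Len i)
  | fieldP (i o s : ℕ) : ℓ[i]? = some (.P o s) → Derivable ℓ (.Len i)
  | forwardVal (i : ℕ) : Derivable ℓ (.Beg i) → Derivable ℓ (.Len i) → Derivable ℓ (.Val i)
  | forwardBeg (i : ℕ) : Derivable ℓ (.Beg i) → Derivable ℓ (.Len i) → Derivable ℓ (.Beg (i+1))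
  | backwardBeg (i : ℕ) : Derivable ℓ (.Beg (i+1)) → Derivable ℓ (.Len i) → Derivable ℓ (.Beg i)
  | backwardVal (i : ℕ) : Derivable ℓ (.Beg (i+1)) → Derivable ℓ (.Len i) → Derivable ℓ (.Val i)
  | join (i : ℕ) : Derivable ℓ (.Beg i) → Derivable ℓ (.Beg (i+1)) → Derivable ℓ (.Len i)
  | jumpRight (i o s : ℕ) : ℓ[i]? = some (.P o s) → Derivable ℓ (.Val i) →
      Derivable ℓ (.Beg o) → Derivable ℓ (.Beg (o+s))
  | jumpLeft (i o s : ℕ) : ℓ[i]? = some (.P o s) → Derivable ℓ (.Val i) →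
      Derivable ℓ (.Beg (o+s)) → Derivable ℓ (.Beg o)

/-- A layout is deserializable if the length of every varfield is derivable. -/
def Deserializable (ℓ : List Item) : Prop :=
  ∀ j : ℕ, ℓ[j]? = some Item.V → Derivable ℓ (.Len j)

theorem derivable_inv (ℓ : List Item) (hnp : ∀ o s : ℕ, Item.P o s ∉ ℓ) (j : ℕ)
    (hj : ℓ[j]? = some Item.V) (f : ParseFact) (h : Derivable ℓ f) :
    match f with
    | .Beg i => i ≤ j
    | .Len i => i ≠ j
    | .Val _ => True := by
  induction h with
  | begin => exact Nat.zero_le j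
  | fieldF i h => 
    rintro rfl
    simp [hj] at h
  | fieldP i o s h => exact absurd (List.mem_of_getElem? h) (hnp o s)
  | forwardVal => trivial
  | forwardBeg i _ _ a b => simp only at a b ⊢; omega
  | backwardBeg i _ _ a b => simp only at a b ⊢; omega
  | backwardVal => trivial
  | join i _ _ a b => simp only at a b ⊢; omega
  | jumpRight i o s h => exact absurd (List.mem_of_getElem? h) (hnp o s)
  | jumpLeft i o s h => exact absurd (List.mem_of_getElem? h) (hnp o s)

/-- A valid layout containing a varfield but no pointer is not deserializable. -/
theorem no_pointer_not_deserializable (ℓ : List Item) (hval : ValidLayout ℓ)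
    (hv : Item.V ∈ ℓ) (hnp : ∀ o s : ℕ, Item.P o s ∉ ℓ) :
    ¬ Deserializable ℓ := by
  intro hd
  obtain ⟨j, hj⟩ := List.mem_iff_getElem?.mp hv
  exact derivable_inv ℓ hnp j hj _ (hd j hj) rfl
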